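/- arXiv:2301.05772 — 3 statements merged into one kernel-verified Lean document; each statement's English description precedes it below -/
import Mathlib

section
/- For every prime p and every integer n ≥ 1, the p-adic valuation of the rational number p^(n-1)/n! is nonnegative. (Hence the power series w(x) = p^{-1}(exp(px) − 1) = Σ_{n≥1} (p^{n-1}/n!) xⁿ lies in ℤ_p[[x]].) -/
theorem padicValRat_self_pow_div (p : ℕ) [hp : Fact p.Prime] (k : ℕ) {q : ℚ} (hq : q ≠ 0) :
    padicValRat p ((p : ℚ) ^ k / q) = k - padicValRat p q := by
  have hp_ne_zero : (p : ℚ) ≠ 0 := Nat.cast_ne_zero.mpr hp.out.ne_zero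
  rw [padicValRat.div (pow_ne_zero k hp_ne_zero) hq, padicValRat.pow,
    padicValRat.self hp.out.one_lt, mul_one]

/-- For every prime `p` and every `n ≥ 1`, the `p`-adic valuation of `p^(n-1)/n!` is
nonnegative; hence `w(x) = p⁻¹(exp(px) - 1) = Σ_{n≥1} (p^{n-1}/n!) xⁿ` lies in `ℤ_p[[x]]`. -/
theorem p_adic_integrality_exp_coefficients (p : ℕ) (hp : p.Prime) (n : ℕ) (hn : 1 ≤ n) :
    0 ≤ padicValRat p ((p ^ (n - 1) : ℚ) / (n.factorial : ℚ)) := by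
  have : Fact p.Prime := ⟨hp⟩
  -- Legendre: `(p - 1) * v_p(n!) = n - s_p(n)`, and the base-`p` digit sum `s_p(n)` is positive.
  have valuation_lt : padicValNat p n.factorial < n :=
    padicValNat_factorial_lt_of_ne_zero p (Nat.one_le_iff_ne_zero.mp hn)
  rw [padicValRat_self_pow_div p (n - 1) (Nat.cast_ne_zero.mpr n.factorial_ne_zero),
    padicValRat.of_nat, sub_nonneg, Nat.cast_le]
  exact Nat.le_sub_one_of_lt valuation_lt
end

section
/- The function x ↦ log|1 − e^x| is locally integrable on ℝ (with respect to Lebesgue measure). Hence li₁(x) = −log|1 − e^x|, which has a logarithmic singularity only at x = 0, defines a distribution on ℝ. -/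
open MeasureTheory Set
open scoped Interval

theorem locallyIntegrableOn_of_forall_intervalIntegrable {ε : Type*} [TopologicalSpace ε]
    [ENormedAddMonoid ε] {f : ℝ → ε} {μ : Measure ℝ} {U : Set ℝ} (hU : IsOpen U)
    (hf : ∀ a b, [[a, b]] ⊆ U → IntervalIntegrable f μ a b) : LocallyIntegrableOn f U μ := by
  intro x hx
  obtain ⟨a, b, -, hnhds, hsub⟩ := exists_Icc_mem_subset_of_mem_nhds (hU.mem_nhds hx)
  obtain ⟨hax, hxb⟩ := Icc_mem_nhds_iff.mp hnhds
  have hint : IntervalIntegrable f μ a b := hf a b (by rwa [uIcc_of_le (hax.trans hxb).le])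
  exact ⟨Ioc a b, mem_nhdsWithin_of_mem_nhds (Ioc_mem_nhds hax hxb), hint.1⟩

theorem locallyIntegrableOn_log_norm_of_meromorphicOn {E : Type*} [NormedAddCommGroup E]
    [NormedSpace ℝ E] {f : ℝ → E} {U : Set ℝ} (hU : IsOpen U) (hf : MeromorphicOn f U) :
    LocallyIntegrableOn (fun x ↦ Real.log ‖f x‖) U :=
  locallyIntegrableOn_of_forall_intervalIntegrable hU fun _ _ hsub ↦
    (hf.mono_set hsub).intervalIntegrable_log_norm

/-- `x ↦ log|1 - e^x|` is locally integrable on `ℝ`; hence `li₁(x) = -log|1 - e^x|`,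
with a logarithmic singularity only at `x = 0`, defines a distribution on `ℝ`. -/
theorem li_one_locally_integrable :
    MeasureTheory.LocallyIntegrable (fun x : ℝ => Real.log |1 - Real.exp x|)
      MeasureTheory.volume := by
  have hmero : MeromorphicOn (fun x : ℝ ↦ 1 - Real.exp x) univ :=
    fun _ _ ↦ (analyticAt_const.sub analyticAt_rexp).meromorphicAt
  exact locallyIntegrableOn_univ.mp
    (locallyIntegrableOn_log_norm_of_meromorphicOn isOpen_univ hmero)
end

section
/- Stefan–Boltzmann law: for all positive reals h, k, T, the total radiance of Planck's black-body spectrum ρ(ν, T) = 2h ν³/(e^{hν/(kT)} − 1) satisfies ∫₀^∞ 2h ν³/(e^{hν/(kT)} − 1) dν = (2π⁴/15) · k⁴T⁴/h³; in particular the total radiance scales as the fourth power of the temperature T. -/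
/-!
For `t > 0`, Planck's factor is the geometric series `1 / (e^t - 1) = ∑ e^{-nt}` over `n ≥ 1`. Since
the Mellin transform of `e^{-nt}` at `s` is `Γ(s) / n^s`, that of Planck's factor is `Γ(s) ζ(s)`
for `Re s > 1`, where absolute convergence allows termwise integration. At `s = 4` this is
`3! · π⁴ / 90 = π⁴ / 15`, and scaling frequencies by `b = h / (kT)` divides it by `b⁴`, whence the
fourth power of the temperature.
-/

open MeasureTheory Set Real

lemma hasSum_exp_neg_nat_add_one_mul {t : ℝ} (ht : 0 < t) :
    HasSum (fun n : ℕ ↦ exp (-(n + 1) * t)) (exp t - 1)⁻¹ := by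
  have hlt : exp (-t) < 1 := exp_lt_one_iff.mpr (neg_lt_zero.mpr ht)
  have hgeom : HasSum (fun n : ℕ ↦ exp (-t) ^ n * exp (-t)) ((1 - exp (-t))⁻¹ * exp (-t)) :=
    (hasSum_geometric_of_lt_one (exp_pos _).le hlt).mul_right _
  convert! hgeom using 1
  · ext n
    rw [← pow_succ, ← exp_nat_mul]
    push_cast
    ring_nf
  · rw [exp_neg, ← mul_inv, sub_mul, one_mul, inv_mul_cancel₀ (exp_ne_zero t)]

lemma mellin_inv_exp_sub_one {s : ℂ} (hs : 1 < s.re) :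
    mellin (fun t ↦ (((exp t - 1)⁻¹ : ℝ) : ℂ)) s = Complex.Gamma s * riemannZeta s := by
  have hexp (t : ℝ) (ht : t ∈ Ioi 0) :
      HasSum (fun n : ℕ ↦ (1 : ℂ) * exp (-(n + 1 : ℝ) * t)) ((exp t - 1)⁻¹ : ℝ) := by
    simpa only [one_mul] using Complex.hasSum_ofReal.mpr (hasSum_exp_neg_nat_add_one_mul ht)
  have hsummable : Summable fun n : ℕ ↦ ‖(1 : ℂ)‖ / (n + 1 : ℝ) ^ s.re := by
    simpa using (summable_nat_add_iff 1).mpr (summable_one_div_nat_rpow.mpr hs)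
  have hmellin := hasSum_mellin (fun n : ℕ ↦ .inr n.cast_add_one_pos) (one_pos.trans hs)
    hexp hsummable
  rw [← hmellin.tsum_eq, zeta_eq_tsum_one_div_nat_add_one_cpow hs, ← tsum_mul_left]
  simp [div_eq_mul_inv]

lemma integral_pow_div_exp_mul_sub_one {n : ℕ} (hn : n ≠ 0) {b : ℝ} (hb : 0 < b) :
    ((∫ t in Ioi (0 : ℝ), t ^ n / (exp (b * t) - 1) : ℝ) : ℂ) =
      n.factorial * riemannZeta (n + 1) / b ^ (n + 1) := by
  have hs : 1 < ((n : ℂ) + 1).re := by simpa using hn.pos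
  calc ((∫ t in Ioi (0 : ℝ), t ^ n / (exp (b * t) - 1) : ℝ) : ℂ)
    _ = mellin (fun t ↦ (((exp (b * t) - 1)⁻¹ : ℝ) : ℂ)) (n + 1) := by
      simp [mellin, ← integral_complex_ofReal, div_eq_mul_inv]
    _ = (b : ℂ) ^ (-((n : ℂ) + 1)) * (Complex.Gamma (n + 1) * riemannZeta (n + 1)) := by
      rw [mellin_comp_mul_left (fun t ↦ (((exp t - 1)⁻¹ : ℝ) : ℂ)) _ hb,
        mellin_inv_exp_sub_one hs, smul_eq_mul]
    _ = n.factorial * riemannZeta (n + 1) / b ^ (n + 1) := by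
      rw [Complex.cpow_neg, Complex.Gamma_nat_eq_factorial, ← Nat.cast_add_one,
        Complex.cpow_natCast, div_eq_inv_mul]

lemma integral_pow_three_div_exp_mul_sub_one {b : ℝ} (hb : 0 < b) :
    ∫ t in Ioi (0 : ℝ), t ^ 3 / (exp (b * t) - 1) = π ^ 4 / (15 * b ^ 4) := by
  have hzeta : riemannZeta ((3 : ℕ) + 1) = π ^ 4 / 90 := by
    rw [← riemannZeta_four]
    norm_num
  apply Complex.ofReal_injective
  rw [integral_pow_div_exp_mul_sub_one three_ne_zero hb, hzeta]
  push_cast [Nat.factorial]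
  ring

/-- **Stefan–Boltzmann law**: for positive `h`, `k`, `T`, the total radiance of Planck's
black-body spectrum `ρ(ν,T) = 2hν³/(e^{hν/(kT)} - 1)` is `(2π⁴/15)·k⁴T⁴/h³`; in particular
it scales as the fourth power of the temperature. -/
theorem stefan_boltzmann (h k T : ℝ) (hh : 0 < h) (hk : 0 < k) (hT : 0 < T) :
    ∫ ν in Set.Ioi (0 : ℝ), 2 * h * ν ^ 3 / (Real.exp (h * ν / (k * T)) - 1) =
      (2 * Real.pi ^ 4 / 15) * (k ^ 4 * T ^ 4 / h ^ 3) := by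
  calc ∫ ν in Ioi (0 : ℝ), 2 * h * ν ^ 3 / (exp (h * ν / (k * T)) - 1)
    _ = 2 * h * ∫ ν in Ioi (0 : ℝ), ν ^ 3 / (exp (h / (k * T) * ν) - 1) := by
      simp only [← integral_const_mul, mul_div_assoc, mul_div_right_comm h]
    _ = 2 * h * (π ^ 4 / (15 * (h / (k * T)) ^ 4)) := by
      rw [integral_pow_three_div_exp_mul_sub_one (by positivity)]
    _ = (2 * π ^ 4 / 15) * (k ^ 4 * T ^ 4 / h ^ 3) := by
      field_simp
end
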